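/- (Solution 3A of Table 1.) Let a ∈ ℂ and let P(λ,t) = λ⁴ − 6λ²t + 4λt + 4λt² − 3t². Let U ⊆ ℂ be a nonempty open set and λ : U → ℂ a twice differentiable function such that for every t ∈ U one has t ∉ {0,1}, λ(t) ∉ {0,1,t}, P(λ(t),t) = 0, and ∂P/∂λ(λ(t),t) ≠ 0. Then λ is a solution of PVI_α with α = (a, 9a, a, a). -/

import Mathlib

/-!
A solution of the Riccati equation
`t (t - 1) x' = κ₀ (x - 1) (x - t) + κ₁ x (x - t) + κ₂ x (x - 1)` solves Painlevé VI with
`α = ((κ₀ + κ₁ + κ₂)² / 2, κ₀² / 2, κ₁² / 2, (1 - κ₂)² / 2)`. Implicit differentiation shows that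
a branch of the curve `P(x, t) = 0` satisfies this equation with `(κ₀, κ₁, κ₂) = (-1/2, -1/6, 5/6)`,
hence solves Painlevé VI with `α = (1, 9, 1, 1) / 72`. On the curve the coefficient of `a` in the
equation with parameter `(a, 9a, a, a)` vanishes, so the value `a = 1/72` may be replaced by any
other.
-/

/-- `l : ℂ → ℂ` (viewed as a function on `U`) is a solution of the Painlevé VI equation
`PVI_α` with parameter `α = (α₀, α₁, α₂, α₃)`:  `l` is twice differentiable on `U`, for every
`t ∈ U` one has `t ∉ {0,1}`, `l t ∉ {0,1,t}`, and the Painlevé VI ODE holds on `U`. -/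
def IsPVISolution (α : Fin 4 → ℂ) (U : Set ℂ) (l : ℂ → ℂ) : Prop :=
  (∀ t ∈ U, DifferentiableAt ℂ l t) ∧
  (∀ t ∈ U, DifferentiableAt ℂ (deriv l) t) ∧
  (∀ t ∈ U, t ≠ 0 ∧ t ≠ 1 ∧ l t ≠ 0 ∧ l t ≠ 1 ∧ l t ≠ t) ∧
  (∀ t ∈ U, deriv (deriv l) t =
    (1 / 2) * (1 / l t + 1 / (l t - 1) + 1 / (l t - t)) * (deriv l t) ^ 2
      - (1 / t + 1 / (t - 1) + 1 / (l t - t)) * deriv l t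
      + (l t * (l t - 1) * (l t - t)) / (t ^ 2 * (t - 1) ^ 2) *
        (α 0 - α 1 * t / (l t) ^ 2 + α 2 * (t - 1) / (l t - 1) ^ 2
          + (1 / 2 - α 3) * (t * (t - 1)) / (l t - t) ^ 2))

open Polynomial

/-- The polynomial `P(λ, t)` of the table, as a polynomial in `λ` (the variable `X`)
with coefficients depending on `t`. -/
noncomputable def P (t : ℂ) : Polynomial ℂ := X ^ 4 - C (6 * t) * X ^ 2 + C (4 * t) * X + C (4 * t ^ 2) * X - C (3 * t ^ 2)

open Filter Topology

section PainleveSix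

variable {κ₀ κ₁ κ₂ t x y : ℂ} {α β : Fin 4 → ℂ} {U : Set ℂ} {l : ℂ → ℂ}

/-- The right-hand side of the Painlevé VI equation, as a function of `t`, `x = λ(t)` and
`y = λ'(t)`. It is written exactly as in `IsPVISolution`. -/
noncomputable def pviField (α : Fin 4 → ℂ) (t x y : ℂ) : ℂ :=
  (1 / 2) * (1 / x + 1 / (x - 1) + 1 / (x - t)) * y ^ 2
    - (1 / t + 1 / (t - 1) + 1 / (x - t)) * y
    + (x * (x - 1) * (x - t)) / (t ^ 2 * (t - 1) ^ 2) *
      (α 0 - α 1 * t / x ^ 2 + α 2 * (t - 1) / (x - 1) ^ 2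
        + (1 / 2 - α 3) * (t * (t - 1)) / (x - t) ^ 2)

/-- The part of the Painlevé VI equation that is linear in the parameter `α`, without its prefactor
`x (x - 1) (x - t) / (t² (t - 1)²)`. The equation depends on `α` through this quantity only. -/
noncomputable def pviForce (α : Fin 4 → ℂ) (t x : ℂ) : ℂ :=
  α 0 - α 1 * t / x ^ 2 + α 2 * (t - 1) / (x - 1) ^ 2 - α 3 * (t * (t - 1)) / (x - t) ^ 2

theorem pviField_congr (h : pviForce α t x = pviForce β t x) :
    pviField α t x y = pviField β t x y := by
  unfold pviForce at h
  unfold pviField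
  linear_combination (x * (x - 1) * (x - t)) / (t ^ 2 * (t - 1) ^ 2) * h

theorem IsPVISolution.congr_pviForce (hl : IsPVISolution α U l)
    (h : ∀ t ∈ U, pviForce α t (l t) = pviForce β t (l t)) : IsPVISolution β U l := by
  obtain ⟨hdiff, hdiff2, hreg, hode⟩ := hl
  exact ⟨hdiff, hdiff2, hreg, fun t ht => (hode t ht).trans (pviField_congr (h t ht))⟩

/-- The Riccati polynomial for `t (t - 1) x'` whose solutions solve Painlevé VI. Here `κ₀`, `κ₁`,
`κ₂` are its residues at `x = 0, 1, t` after division by `x (x - 1) (x - t)`. -/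
def pviRiccati (κ₀ κ₁ κ₂ t x : ℂ) : ℂ :=
  κ₀ * ((x - 1) * (x - t)) + κ₁ * (x * (x - t)) + κ₂ * (x * (x - 1))

/-- The total derivative of `pviRiccati κ₀ κ₁ κ₂ t x` with respect to `t` along a function `x` of
`t` whose derivative is `y`. -/
def pviRiccatiDeriv (κ₀ κ₁ κ₂ t x y : ℂ) : ℂ :=
  κ₀ * (y * (x - t) + (x - 1) * (y - 1)) + κ₁ * (y * (x - t) + x * (y - 1)) +
    κ₂ * (y * (x - 1) + x * y)

theorem hasDerivAt_pviRiccati (hl : HasDerivAt l y t) :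
    HasDerivAt (fun s => pviRiccati κ₀ κ₁ κ₂ s (l s)) (pviRiccatiDeriv κ₀ κ₁ κ₂ t (l t) y) t := by
  have hl1 := hl.sub_const 1
  have hlt := hl.sub (hasDerivAt_id' t)
  exact (((hl1.mul hlt).const_mul κ₀).add ((hl.mul hlt).const_mul κ₁)).add
    ((hl.mul hl1).const_mul κ₂)

theorem hasDerivAt_deriv_of_riccati (ht0 : t ≠ 0) (ht1 : t ≠ 1) (hl : DifferentiableAt ℂ l t)
    (hric : ∀ᶠ s in 𝓝 t, s * (s - 1) * deriv l s = pviRiccati κ₀ κ₁ κ₂ s (l s)) :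
    HasDerivAt (deriv l)
      ((pviRiccatiDeriv κ₀ κ₁ κ₂ t (l t) (deriv l t) - (2 * t - 1) * deriv l t) /
        (t * (t - 1))) t := by
  have hT : t * (t - 1) ≠ 0 := mul_ne_zero ht0 (sub_ne_zero.mpr ht1)
  have hTderiv : HasDerivAt (fun s : ℂ => s * (s - 1)) (2 * t - 1) t :=
    ((hasDerivAt_id' t).mul ((hasDerivAt_id' t).sub_const 1)).congr_deriv (by ring)
  have hquot : deriv l =ᶠ[𝓝 t] fun s => pviRiccati κ₀ κ₁ κ₂ s (l s) / (s * (s - 1)) := by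
    filter_upwards [hric, hTderiv.continuousAt.eventually_ne hT] with s hs hTs
    exact eq_div_of_mul_eq hTs ((mul_comm _ _).trans hs)
  refine (((hasDerivAt_pviRiccati hl.hasDerivAt).div hTderiv hT).congr_of_eventuallyEq
    hquot).congr_deriv ?_
  rw [← hric.self_of_nhds]
  field_simp

theorem pviField_of_riccati (ht0 : t ≠ 0) (ht1 : t ≠ 1) (hx0 : x ≠ 0) (hx1 : x ≠ 1) (hxt : x ≠ t)
    (hy : t * (t - 1) * y = pviRiccati κ₀ κ₁ κ₂ t x) :
    pviField ![(κ₀ + κ₁ + κ₂) ^ 2 / 2, κ₀ ^ 2 / 2, κ₁ ^ 2 / 2, (1 - κ₂) ^ 2 / 2] t x y =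
      (pviRiccatiDeriv κ₀ κ₁ κ₂ t x y - (2 * t - 1) * y) / (t * (t - 1)) := by
  have ht1' := sub_ne_zero.mpr ht1
  have hx1' := sub_ne_zero.mpr hx1
  have hxt' := sub_ne_zero.mpr hxt
  obtain rfl : y = pviRiccati κ₀ κ₁ κ₂ t x / (t * (t - 1)) :=
    eq_div_of_mul_eq (mul_ne_zero ht0 ht1') ((mul_comm _ _).trans hy)
  simp only [pviField, pviRiccati, pviRiccatiDeriv, Matrix.cons_val]
  field_simp
  ring

theorem isPVISolution_of_riccati (hU : IsOpen U) (hdiff : ∀ t ∈ U, DifferentiableAt ℂ l t)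
    (hreg : ∀ t ∈ U, t ≠ 0 ∧ t ≠ 1 ∧ l t ≠ 0 ∧ l t ≠ 1 ∧ l t ≠ t)
    (hric : ∀ t ∈ U, t * (t - 1) * deriv l t = pviRiccati κ₀ κ₁ κ₂ t (l t)) :
    IsPVISolution ![(κ₀ + κ₁ + κ₂) ^ 2 / 2, κ₀ ^ 2 / 2, κ₁ ^ 2 / 2, (1 - κ₂) ^ 2 / 2] U l := by
  have hderiv2 := fun t (ht : t ∈ U) =>
    hasDerivAt_deriv_of_riccati (hreg t ht).1 (hreg t ht).2.1 (hdiff t ht)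
      (eventually_of_mem (hU.mem_nhds ht) hric)
  refine ⟨hdiff, fun t ht => (hderiv2 t ht).differentiableAt, hreg, fun t ht => ?_⟩
  obtain ⟨ht0, ht1, hx0, hx1, hxt⟩ := hreg t ht
  exact (hderiv2 t ht).deriv.trans (pviField_of_riccati ht0 ht1 hx0 hx1 hxt (hric t ht)).symm

end PainleveSix

section Quartic

variable {t x y : ℂ} {l : ℂ → ℂ}

theorem eval_P (t x : ℂ) :
    (P t).eval x = x ^ 4 - 6 * t * x ^ 2 + 4 * t * x + 4 * t ^ 2 * x - 3 * t ^ 2 := by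
  simp [P]

theorem eval_derivative_P (t x : ℂ) :
    (derivative (P t)).eval x = 4 * x ^ 3 - 12 * t * x + 4 * t + 4 * t ^ 2 := by
  simp only [P, derivative_sub, derivative_add, derivative_C_mul, derivative_C, derivative_X_pow,
    derivative_X, eval_add, eval_sub, eval_mul, eval_C, eval_pow, eval_X, eval_one, eval_zero]
  ring

theorem hasDerivAt_eval_P (hl : HasDerivAt l y t) :
    HasDerivAt (fun s => (P s).eval (l s))
      ((derivative (P t)).eval (l t) * y + (-6 * l t ^ 2 + 4 * l t + 8 * t * l t - 6 * t)) t := by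
  have hid := hasDerivAt_id' t
  simp only [eval_P, eval_derivative_P]
  refine (((((hl.pow 4).sub ((hid.const_mul 6).mul (hl.pow 2))).add
    ((hid.const_mul 4).mul hl)).add (((hid.pow 2).const_mul 4).mul hl)).sub
    ((hid.pow 2).const_mul 3)).congr_deriv ?_
  simp only [Pi.pow_apply, Nat.cast_ofNat]
  ring

theorem riccati_of_eval_P_eq_zero (hl : DifferentiableAt ℂ l t)
    (hP : ∀ᶠ s in 𝓝 t, (P s).eval (l s) = 0) (hP' : (derivative (P t)).eval (l t) ≠ 0) :
    t * (t - 1) * deriv l t = pviRiccati (-1 / 2) (-1 / 6) (5 / 6) t (l t) := by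
  have himplicit := (hasDerivAt_eval_P hl.hasDerivAt).unique
    ((hasDerivAt_const t (0 : ℂ)).congr_of_eventuallyEq hP)
  have hcurve := hP.self_of_nhds
  rw [eval_P] at hcurve
  rw [eval_derivative_P] at himplicit hP'
  apply mul_left_cancel₀ hP'
  unfold pviRiccati
  linear_combination t * (t - 1) * himplicit - (2 / 3 * l t + 8 / 3 * t - 4 / 3) * hcurve

theorem pviForce_eq_zero_of_eval_P_eq_zero (a : ℂ) (hx0 : x ≠ 0) (hx1 : x ≠ 1) (hxt : x ≠ t)
    (hP : (P t).eval x = 0) : pviForce ![a, 9 * a, a, a] t x = 0 := by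
  have hx1' := sub_ne_zero.mpr hx1
  have hxt' := sub_ne_zero.mpr hxt
  have hfactor : pviForce ![a, 9 * a, a, a] t x * (x ^ 2 * (x - 1) ^ 2 * (x - t) ^ 2) =
      a * (x ^ 2 - (2 + 2 * t) * x + 3 * t) * (P t).eval x := by
    simp only [pviForce, eval_P, Matrix.cons_val]
    field_simp
    ring
  rw [hP, mul_zero] at hfactor
  exact (mul_eq_zero_iff_right (by positivity)).mp hfactor

end Quartic

theorem stmt6 (a : ℂ)
    (U : Set ℂ) (hU : U.Nonempty) (hUopen : IsOpen U) (l : ℂ → ℂ)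
    (hdiff : ∀ t ∈ U, DifferentiableAt ℂ l t)
    (hdiff2 : ∀ t ∈ U, DifferentiableAt ℂ (deriv l) t)
    (hreg : ∀ t ∈ U, t ≠ 0 ∧ t ≠ 1 ∧ l t ≠ 0 ∧ l t ≠ 1 ∧ l t ≠ t)
    (heq : ∀ t ∈ U, (P t).eval (l t) = 0)
    (hder : ∀ t ∈ U, (Polynomial.derivative (P t)).eval (l t) ≠ 0) :
    IsPVISolution ![a, 9 * a, a, a] U l := by
  have hric : ∀ t ∈ U,
      t * (t - 1) * deriv l t = pviRiccati (-1 / 2) (-1 / 6) (5 / 6) t (l t) := fun t ht =>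
    riccati_of_eval_P_eq_zero (hdiff t ht) (eventually_of_mem (hUopen.mem_nhds ht) heq) (hder t ht)
  have hforce : ∀ b : ℂ, ∀ t ∈ U, pviForce ![b, 9 * b, b, b] t (l t) = 0 := by
    intro b t ht
    obtain ⟨-, -, hx0, hx1, hxt⟩ := hreg t ht
    exact pviForce_eq_zero_of_eval_P_eq_zero b hx0 hx1 hxt (heq t ht)
  have hsol : IsPVISolution ![1 / 72, 9 * (1 / 72), 1 / 72, 1 / 72] U l := by
    convert isPVISolution_of_riccati hUopen hdiff hreg hric using 1
    ext i
    fin_cases i <;> norm_num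
  exact hsol.congr_pviForce fun t ht => (hforce (1 / 72) t ht).trans (hforce a t ht).symm
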